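/- Let R = (c_1, …, c_r) be a finite family of rankings of Fin n (r ≥ 1) and let D_1 ≠ D_2 be two different sets of eventual competitors (connected components of the competitivity graph G_c(R)). Write D_i → D_j when for every a ∈ D_i and every b ∈ D_j there is a ranking c_m ∈ R with a ≺_{c_m} b. Then exactly one of D_1 → D_2 and D_2 → D_1 holds; consequently, → is a total order relation on the sets of eventual competitors. -/

import Mathlib

/-- `i` precedes `j` in the ranking `c` (i.e. the position of `i` is smaller). -/
def Prec {n : ℕ} (c : Equiv.Perm (Fin n)) (i j : Fin n) : Prop :=
  c⁻¹ i < c⁻¹ j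

/-- Two nodes compete with respect to a family of rankings `c`. -/
def Compete {n r : ℕ} (c : Fin r → Equiv.Perm (Fin n)) (i j : Fin n) : Prop :=
  ∃ s t : Fin r, Prec (c s) i j ∧ Prec (c t) j i

/-- The competitivity graph of a family of rankings. -/
def competitivityGraph {n r : ℕ} (c : Fin r → Equiv.Perm (Fin n)) :
    SimpleGraph (Fin n) where
  Adj i j := Compete c i j
  symm := by
    refine ⟨?_⟩
    rintro i j ⟨s, t, h1, h2⟩
    exact ⟨t, s, h2, h1⟩
  loopless := by
    refine ⟨?_⟩
    rintro i ⟨s, t, h1, _⟩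
    exact lt_irrefl _ h1

/-! Rankings agree on any two elements that do not compete. If `a` and `a'` compete, some ranking
places `a'` before `a`; if all of them place `a` before `b`, that one places `a'` before `b`, and
hence so do all of them as soon as `a'` does not compete with `b`. Thus the common order of `a`
and `b` is unchanged when either moves along a path inside its own component. -/

variable {α ι : Type*}

/-- The competitivity graph of an arbitrary family of irreflexive relations: two elements are
adjacent when two members of the family order them in opposite ways. -/
def disagreementGraph (r : ι → α → α → Prop) [∀ m, Std.Irrefl (r m)] : SimpleGraph α where
  Adj a b := ∃ s t, r s a b ∧ r t b a
  symm := ⟨fun _ _ ⟨s, t, hs, ht⟩ => ⟨t, s, ht, hs⟩⟩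
  loopless := ⟨fun a ⟨s, _, hs, _⟩ => irrefl_of (r s) a hs⟩

/-- The relation `→` between sets of eventual competitors. It never relates a component to
itself, since the two elements it compares may coincide. -/
def ComponentPrec (r : ι → α → α → Prop) [∀ m, Std.Irrefl (r m)]
    (C D : (disagreementGraph r).ConnectedComponent) : Prop :=
  ∀ a ∈ C.supp, ∀ b ∈ D.supp, ∃ m, r m a b

namespace disagreementGraph

variable {r : ι → α → α → Prop} {a a' b b' : α} {s : ι}

theorem rel_of_not_adj [∀ m, Std.Irrefl (r m)] [∀ m, Std.Trichotomous (r m)]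
    (hab : ¬(disagreementGraph r).Adj a b) (h : r s a b) (t : ι) : r t a b := by
  by_contra ht
  exact ne_of_irrefl h (Std.Trichotomous.trichotomous a b ht fun h' => hab ⟨s, t, h, h'⟩)

variable [∀ m, IsStrictTotalOrder α (r m)]

theorem rel_of_adj_left (haa' : (disagreementGraph r).Adj a a')
    (ha'b : ¬(disagreementGraph r).Adj a' b) (h : ∀ m, r m a b) (t : ι) : r t a' b :=
  have ⟨_, u, _, hu⟩ := haa'
  rel_of_not_adj ha'b (trans_of (r u) hu (h u)) t

theorem rel_of_adj_right (hbb' : (disagreementGraph r).Adj b b')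
    (hab' : ¬(disagreementGraph r).Adj a b') (h : ∀ m, r m a b) (t : ι) : r t a b' :=
  have ⟨u, _, hu, _⟩ := hbb'
  rel_of_not_adj hab' (trans_of (r u) (h u) hu) t

theorem rel_of_reachable (ha : (disagreementGraph r).Reachable a a')
    (hb : (disagreementGraph r).Reachable b b') (hab : ¬(disagreementGraph r).Reachable a b)
    (h : r s a b) (t : ι) : r t a' b' := by
  have not_adj {x y} (hx : (disagreementGraph r).Reachable a x)
      (hy : (disagreementGraph r).Reachable b y) : ¬(disagreementGraph r).Adj x y :=
    fun hxy => hab (hx.trans (hxy.reachable.trans hy.symm))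
  have move_left : ∀ m, r m a' b := by
    rw [SimpleGraph.reachable_iff_reflTransGen] at ha
    induction ha with
    | refl => exact rel_of_not_adj (not_adj .rfl .rfl) h
    | tail hax hxy ih =>
      have hay := (SimpleGraph.reachable_iff_reflTransGen _ _).2 (hax.tail hxy)
      exact rel_of_adj_left hxy (not_adj hay .rfl) ih
  rw [SimpleGraph.reachable_iff_reflTransGen] at hb
  induction hb generalizing t with
  | refl => exact move_left t
  | tail hbx hxy ih =>
    have hby := (SimpleGraph.reachable_iff_reflTransGen _ _).2 (hbx.tail hxy)
    exact rel_of_adj_right hxy (not_adj ha hby) ih t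

end disagreementGraph

namespace ComponentPrec

variable {r : ι → α → α → Prop} {a b : α} {s : ι}

section Irrefl

variable [∀ m, Std.Irrefl (r m)] {C D : (disagreementGraph r).ConnectedComponent}

protected theorem irrefl (C : (disagreementGraph r).ConnectedComponent) :
    ¬ComponentPrec r C C := fun h =>
  have ⟨a, ha⟩ := C.nonempty_supp
  have ⟨m, hm⟩ := h a ha a ha
  irrefl_of (r m) a hm

theorem rel_of_mem_supp [∀ m, Std.Trichotomous (r m)] (h : ComponentPrec r C D)
    (ha : a ∈ C.supp) (hb : b ∈ D.supp) (t : ι) : r t a b := by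
  have hab : ¬(disagreementGraph r).Adj a b := fun hab => by
    obtain rfl := SimpleGraph.ConnectedComponent.eq_of_common_vertex
      (C.mem_supp_of_adj_mem_supp ha hab) hb
    exact ComponentPrec.irrefl C h
  have ⟨m, hm⟩ := h a ha b hb
  exact disagreementGraph.rel_of_not_adj hab hm t

end Irrefl

variable [∀ m, IsStrictTotalOrder α (r m)] {C D E : (disagreementGraph r).ConnectedComponent}

theorem of_rel (hCD : C ≠ D) (ha : a ∈ C.supp) (hb : b ∈ D.supp) (h : r s a b) :
    ComponentPrec r C D := fun _ hx _ hy =>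
  have hab : ¬(disagreementGraph r).Reachable a b := fun hab =>
    hCD (ha.symm.trans ((SimpleGraph.ConnectedComponent.sound hab).trans hb))
  ⟨s, disagreementGraph.rel_of_reachable (C.reachable_of_mem_supp ha hx)
    (D.reachable_of_mem_supp hb hy) hab h s⟩

protected theorem trans (hCD : ComponentPrec r C D) (hDE : ComponentPrec r D E) :
    ComponentPrec r C E := fun a ha _ hc =>
  have ⟨b, hb⟩ := D.nonempty_supp
  have ⟨m, hm⟩ := hCD a ha b hb
  ⟨m, trans_of (r m) hm (hDE.rel_of_mem_supp hb hc m)⟩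

theorem or_of_ne [Nonempty ι] (hCD : C ≠ D) : ComponentPrec r C D ∨ ComponentPrec r D C := by
  obtain ⟨a, ha⟩ := C.nonempty_supp
  obtain ⟨b, hb⟩ := D.nonempty_supp
  have m := Classical.arbitrary ι
  rcases trichotomous_of (r m) a b with hab | rfl | hba
  · exact .inl (of_rel hCD ha hb hab)
  · exact absurd (ha.symm.trans hb) hCD
  · exact .inr (of_rel hCD.symm hb ha hba)

end ComponentPrec

theorem xor_of_ne (r : α → α → Prop) [Std.Asymm r] [Std.Trichotomous r] {a b : α} (hab : a ≠ b) :
    Xor (r a b) (r b a) :=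
  ((trichotomous_of r a b).imp_right (Or.resolve_left · hab)).imp
    (fun h => ⟨h, asymm_of r h⟩) (fun h => ⟨h, asymm_of r h⟩)

instance Prec.isStrictTotalOrder {n : ℕ} (c : Equiv.Perm (Fin n)) :
    IsStrictTotalOrder (Fin n) (Prec c) :=
  c⁻¹.injective.isStrictTotalOrder_onFun (r := (· < ·))

theorem componentOrder_total_general [Nonempty ι] (r : ι → α → α → Prop)
    [∀ m, IsStrictTotalOrder α (r m)] :
    IsStrictTotalOrder (disagreementGraph r).ConnectedComponent (ComponentPrec r) where
  irrefl := ComponentPrec.irrefl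
  trans _ _ _ := ComponentPrec.trans
  trichotomous C D hCD hDC := by
    by_contra hne
    exact (ComponentPrec.or_of_ne hne).elim hCD hDC

/-- For any two different connected components `D_1 ≠ D_2` of the competitivity graph of
a nonempty family of rankings, exactly one of `D_1 → D_2` and `D_2 → D_1` holds, where
`D_i → D_j` means that every element of `D_i` precedes every element of `D_j` in some
ranking; hence `→` is a total order relation on the sets of eventual competitors. -/
theorem componentOrder_total {n r : ℕ} (hr : 1 ≤ r) (c : Fin r → Equiv.Perm (Fin n))
    (D1 D2 : (competitivityGraph c).ConnectedComponent) (hD : D1 ≠ D2) :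
    Xor' (∀ a ∈ D1.supp, ∀ b ∈ D2.supp, ∃ m : Fin r, Prec (c m) a b)
         (∀ a ∈ D2.supp, ∀ b ∈ D1.supp, ∃ m : Fin r, Prec (c m) a b) := by
  have : Nonempty (Fin r) := Fin.pos_iff_nonempty.1 hr
  have := componentOrder_total_general fun m => Prec (c m)
  exact xor_of_ne (ComponentPrec fun m => Prec (c m)) hD
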